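/- Let R be a multiplication ring with only finitely many minimal prime ideals. Then an R-module M is a faithful, Noetherian, distributive R-module if and only if M is a faithful multiplication R-module. -/

import Mathlib

/-!
Membership in a submodule can be tested at each maximal ideal `m` (`mem_of_locally`), and everything
is reduced to local statements asserting a property of some `s ∉ m`.

*Distributive implies multiplication.* In a distributive module, the colon ideals `(Rx : y)` and
`(Ry : x)` are comaximal, so locally any two cyclic submodules are comparable. A finitely generated
such module is therefore locally cyclic, and a finitely generated locally cyclic module satisfies
`N = (N : M) M` for every submodule `N`.

*Multiplication implies distributive.* A multiplication module is, at each maximal ideal, either zero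
or cyclic, generated by a member of any prescribed generating set (`IsMultiplicationModule.dichotomy`).
Applied to the ideal `(a, b)` of a multiplication ring, this shows that the localizations of the ring
are chain rings. Hence the localizations of a multiplication module are chain modules, and such
a module is distributive.

*Multiplication implies Noetherian.* By Cohen's theorem, a multiplication ring `R` with finitely many
minimal primes is Noetherian as soon as its primes are finitely generated. A prime `P` that is not
finitely generated vanishes at some maximal ideal containing it; it is then minimal, and vanishes at all
maximal ideals containing it. Distinct minimal primes are comaximal because the localizations are chain
rings, so finiteness gives `e ∈ P` with `1 - e` in every other minimal prime; locally one then
sees `P = Re`, a contradiction. Finally, if `M` is a multiplication module and `F` is the ideal of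
those `c` such that `cM` lies in a finitely generated submodule, then `M = FM`, and since `F` is finitely
generated so is `M`.
-/

/-- A commutative ring `R` is a multiplication ring if for all ideals `I`, `J` of `R` with
`J ⊆ I` there exists an ideal `I'` of `R` such that `J = I'I`. -/
def IsMultiplicationRing (R : Type*) [CommRing R] : Prop :=
  ∀ I J : Ideal R, J ≤ I → ∃ I' : Ideal R, J = I' * I

/-- An `R`-module `M` is a multiplication module if every submodule `N` of `M` is of the form
`N = IM` for some ideal `I` of `R`. -/
def IsMultiplicationModule (R : Type*) (M : Type*) [Semiring R] [AddCommMonoid M]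
    [Module R M] : Prop :=
  ∀ N : Submodule R M, ∃ I : Ideal R, N = I • (⊤ : Submodule R M)

/-- An `R`-module `M` is distributive if its lattice of submodules is distributive. -/
def IsDistributiveModule (R : Type*) (M : Type*) [Semiring R] [AddCommMonoid M]
    [Module R M] : Prop :=
  ∀ M₁ M₂ N : Submodule R M, (M₁ ⊔ M₂) ⊓ N = (M₁ ⊓ N) ⊔ (M₂ ⊓ N)

section Aux

variable {R : Type*} [CommRing R] {M : Type*} [AddCommGroup M] [Module R M]

theorem mem_of_locally {N : Submodule R M} {x : M}
    (h : ∀ m : Ideal R, m.IsMaximal → ∃ s ∉ m, s • x ∈ N) : x ∈ N := by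
  by_contra hx
  have hne : N.comap (LinearMap.toSpanSingleton R M x) ≠ ⊤ := by
    intro ht
    have h1 : (1 : R) ∈ N.comap (LinearMap.toSpanSingleton R M x) := ht ▸ Submodule.mem_top
    simp at h1
    exact hx h1
  obtain ⟨m, hm, hle⟩ := Ideal.exists_le_maximal _ hne
  obtain ⟨s, hs, hsx⟩ := h m hm
  exact hs (hle (by simpa using hsx))

/-- If any two cyclic submodules are comparable at each maximal ideal, the module is distributive:
for `z = u + v`, locally `z` is a multiple of `u` or of `v`. -/
theorem isDistributiveModule_of_locally_chain
    (h : ∀ m : Ideal R, m.IsMaximal → ∀ u v : M,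
      ∃ s ∉ m, s • u ∈ Submodule.span R {v} ∨ s • v ∈ Submodule.span R {u}) :
    IsDistributiveModule R M := by
  intro M₁ M₂ N
  refine le_antisymm ?_ (sup_le (inf_le_inf_right _ le_sup_left) (inf_le_inf_right _ le_sup_right))
  rintro z ⟨hz, hzN⟩
  obtain ⟨u, hu, v, hv, rfl⟩ := Submodule.mem_sup.1 hz
  refine mem_of_locally fun m hm => ?_
  obtain ⟨s, hs, huv | hvu⟩ := h m hm u v
  · refine ⟨s, hs, Submodule.mem_sup_right ⟨?_, N.smul_mem s hzN⟩⟩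
    rw [smul_add]
    exact M₂.add_mem ((Submodule.span_singleton_le_iff_mem _ _).2 hv huv) (M₂.smul_mem s hv)
  · refine ⟨s, hs, Submodule.mem_sup_left ⟨?_, N.smul_mem s hzN⟩⟩
    rw [smul_add]
    exact M₁.add_mem (M₁.smul_mem s hu) ((Submodule.span_singleton_le_iff_mem _ _).2 hu hvu)

/-- The comaximality of `(Rx : y)` and `(Ry : x)` in a distributive module, from distributing
`Rx` over `Ry + R(x - y)`. -/
theorem IsDistributiveModule.exists_smul_mem (h : IsDistributiveModule R M) (x y : M) :
    ∃ s : R, s • y ∈ Submodule.span R {x} ∧ (1 - s) • x ∈ Submodule.span R {y} := by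
  have hx : x ∈ (Submodule.span R {y} ⊔ Submodule.span R {x - y}) ⊓ Submodule.span R {x} := by
    refine ⟨?_, Submodule.mem_span_singleton_self x⟩
    have := Submodule.add_mem_sup (Submodule.mem_span_singleton_self (R := R) y)
      (Submodule.mem_span_singleton_self (R := R) (x - y))
    simpa using this
  rw [h] at hx
  obtain ⟨a, ⟨ha, -⟩, b, ⟨hb, hb'⟩, hab⟩ := Submodule.mem_sup.1 hx
  obtain ⟨r, rfl⟩ := Submodule.mem_span_singleton.1 ha
  obtain ⟨s, rfl⟩ := Submodule.mem_span_singleton.1 hb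
  refine ⟨s, ?_, ?_⟩
  · have h2 := Submodule.sub_mem _
      (Submodule.smul_mem _ s (Submodule.mem_span_singleton_self (R := R) x)) hb'
    rwa [show s • x - s • (x - y) = s • y by module] at h2
  · refine Submodule.mem_span_singleton.2 ⟨r - s, ?_⟩
    have : (1 - s) • x = x - s • x := by module
    rw [this]
    nth_rewrite 1 [← hab]
    module

/-- A finitely generated distributive module is locally cyclic. -/
theorem IsDistributiveModule.locally_cyclic (h : IsDistributiveModule R M) [Module.Finite R M]
    (m : Ideal R) (hm : m.IsMaximal) : ∃ x : M, ∃ s ∉ m, ∀ y : M, s • y ∈ Submodule.span R {x} := by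
  classical
  have key : ∀ S : Finset M, ∃ x : M, ∃ s ∉ m, ∀ y ∈ S, s • y ∈ Submodule.span R {x} := by
    intro S
    induction S using Finset.induction_on with
    | empty => exact ⟨0, 1, (Ideal.ne_top_iff_one m).1 hm.ne_top, by simp⟩
    | insert a S _ ih =>
      obtain ⟨x, s, hs, hS⟩ := ih
      obtain ⟨t, ht, ht'⟩ := h.exists_smul_mem x a
      by_cases htm : t ∈ m
      · have ht1 : 1 - t ∉ m := fun h1 =>
          (Ideal.ne_top_iff_one m).1 hm.ne_top (by simpa using m.add_mem h1 htm)
        refine ⟨a, (1 - t) * s, fun hc => (hm.isPrime.mem_or_mem hc).elim ht1 hs, ?_⟩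
        intro y hy
        rcases Finset.mem_insert.1 hy with rfl | hy
        · exact Submodule.smul_mem _ _ (Submodule.mem_span_singleton_self _)
        · obtain ⟨c, hc⟩ := Submodule.mem_span_singleton.1 (hS y hy)
          rw [mul_smul, ← hc, smul_comm]
          exact Submodule.smul_mem _ _ ht'
      · refine ⟨x, s * t, fun hc => (hm.isPrime.mem_or_mem hc).elim hs htm, ?_⟩
        intro y hy
        rcases Finset.mem_insert.1 hy with rfl | hy
        · rw [mul_smul]
          exact Submodule.smul_mem _ _ ht
        · rw [mul_comm, mul_smul]
          exact Submodule.smul_mem _ _ (hS y hy)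
  obtain ⟨S, hS⟩ := Module.Finite.fg_top (R := R) (M := M)
  obtain ⟨x, s, hs, hx⟩ := key S
  refine ⟨x, s, hs, fun y => ?_⟩
  have hle : Submodule.span R (S : Set M) ≤
      (Submodule.span R {x}).comap (LinearMap.lsmul R M s) := Submodule.span_le.2 hx
  exact hle (hS ▸ Submodule.mem_top)

theorem IsDistributiveModule.isMultiplicationModule (h : IsDistributiveModule R M)
    [Module.Finite R M] : IsMultiplicationModule R M := by
  intro N
  refine ⟨N.colon (⊤ : Submodule R M), le_antisymm ?_ ?_⟩
  · intro n hn
    refine mem_of_locally fun m hm => ?_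
    obtain ⟨x, s, hs, hx⟩ := h.locally_cyclic m hm
    refine ⟨s * s, fun hc => (hm.isPrime.mem_or_mem hc).elim hs hs, ?_⟩
    obtain ⟨a, ha⟩ := Submodule.mem_span_singleton.1 (hx n)
    -- With `s n = a x`, the element `a s` lies in `(N : M)` and `s² n = (a s) x`.
    have has : a * s ∈ N.colon (⊤ : Submodule R M) := by
      refine Submodule.mem_colon.2 fun y _ => ?_
      obtain ⟨b, hb⟩ := Submodule.mem_span_singleton.1 (hx y)
      rw [mul_smul, ← hb, smul_comm, ha]
      exact N.smul_mem _ (N.smul_mem _ hn)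
    rw [mul_smul, ← ha, ← mul_smul, mul_comm s a]
    exact Submodule.smul_mem_smul has Submodule.mem_top
  · exact Submodule.smul_le.2 fun r hr y hy => Submodule.mem_colon.1 hr y hy

/-- At a maximal ideal, a multiplication module is zero or generated by one element of any
given generating set, according to whether that set lies in `mM` or not. -/
theorem IsMultiplicationModule.dichotomy (h : IsMultiplicationModule R M) {S : Set M}
    (hS : Submodule.span R S = ⊤) (m : Ideal R) :
    (∀ x : M, ∃ p ∈ m, (1 - p) • x = 0) ∨
      ∃ x ∈ S, ∃ q ∉ m, ∀ y : M, q • y ∈ Submodule.span R {x} := by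
  by_cases hSm : S ⊆ (m • (⊤ : Submodule R M) : Submodule R M)
  · left
    have htop : m • (⊤ : Submodule R M) = ⊤ := top_le_iff.1 (hS.ge.trans (Submodule.span_le.2 hSm))
    intro x
    obtain ⟨I, hI⟩ := h (Submodule.span R {x})
    have hx : x ∈ m • Submodule.span R {x} := by
      rw [hI, ← Submodule.mul_smul, mul_comm, Submodule.mul_smul, htop, ← hI]
      exact Submodule.mem_span_singleton_self x
    obtain ⟨p, hp, hpx⟩ := Submodule.mem_smul_span_singleton.1 hx
    exact ⟨p, hp, by rw [sub_smul, one_smul, hpx, sub_self]⟩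
  · right
    obtain ⟨x, hxS, hx⟩ := Set.not_subset.1 hSm
    obtain ⟨I, hI⟩ := h (Submodule.span R {x})
    have hIm : ¬ I ≤ m := fun hle =>
      hx (Submodule.smul_mono_left hle (hI ▸ Submodule.mem_span_singleton_self x))
    obtain ⟨q, hq, hqm⟩ := SetLike.not_le_iff_exists.1 hIm
    exact ⟨x, hxS, q, hqm, fun y => hI ▸ Submodule.smul_mem_smul hq Submodule.mem_top⟩

theorem one_sub_notMem {m : Ideal R} (hm : m ≠ ⊤) {p : R} (hp : p ∈ m) : 1 - p ∉ m := fun h1 =>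
  (Ideal.ne_top_iff_one m).1 hm (by simpa using m.add_mem h1 hp)

theorem IsMultiplicationRing.isMultiplicationModule (hR : IsMultiplicationRing R) (I : Ideal R) :
    IsMultiplicationModule R I := by
  intro N
  obtain ⟨J, hJ⟩ := hR I (N.map I.subtype) (Submodule.map_subtype_le I N)
  refine ⟨J, Submodule.map_injective_of_injective I.injective_subtype ?_⟩
  rw [hJ, Submodule.map_smul'', Submodule.map_top, Submodule.range_subtype, smul_eq_mul]

/-- The localizations of a multiplication ring at its maximal ideals are chain rings. -/
theorem IsMultiplicationRing.locally_chain (hR : IsMultiplicationRing R) {m : Ideal R}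
    (hm : m.IsMaximal) (a b : R) : ∃ s ∉ m, (∃ c, s * a = c * b) ∨ ∃ c, s * b = c * a := by
  have ha : a ∈ Ideal.span {a, b} := Ideal.subset_span (by simp)
  have hb : b ∈ Ideal.span {a, b} := Ideal.subset_span (by simp)
  have hS : Submodule.span R ({⟨a, ha⟩, ⟨b, hb⟩} : Set (Ideal.span {a, b})) = ⊤ := by
    apply Submodule.map_injective_of_injective (Ideal.span {a, b}).injective_subtype
    rw [Submodule.map_span, Submodule.map_top, Submodule.range_subtype, Set.image_pair]
    rfl
  rcases (hR.isMultiplicationModule (Ideal.span {a, b})).dichotomy hS m with h0 | ⟨x, hx, q, hq, h⟩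
  · obtain ⟨p, hp, h⟩ := h0 ⟨a, ha⟩
    exact ⟨1 - p, one_sub_notMem hm.ne_top hp, .inl ⟨0, by simpa using congrArg Subtype.val h⟩⟩
  · refine ⟨q, hq, ?_⟩
    rcases hx with rfl | rfl
    · obtain ⟨c, hc⟩ := Submodule.mem_span_singleton.1 (h ⟨b, hb⟩)
      exact .inr ⟨c, by simpa using (congrArg Subtype.val hc).symm⟩
    · obtain ⟨c, hc⟩ := Submodule.mem_span_singleton.1 (h ⟨a, ha⟩)
      exact .inl ⟨c, by simpa using (congrArg Subtype.val hc).symm⟩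

theorem IsMultiplicationModule.isDistributiveModule (h : IsMultiplicationModule R M)
    (hR : IsMultiplicationRing R) : IsDistributiveModule R M := by
  refine isDistributiveModule_of_locally_chain fun m hm u v => ?_
  rcases h.dichotomy (Submodule.span_univ) m with h0 | ⟨x, -, q, hq, h⟩
  · obtain ⟨p, hp, h⟩ := h0 u
    exact ⟨1 - p, one_sub_notMem hm.ne_top hp, .inl (h ▸ Submodule.zero_mem _)⟩
  · obtain ⟨a, ha⟩ := Submodule.mem_span_singleton.1 (h u)
    obtain ⟨b, hb⟩ := Submodule.mem_span_singleton.1 (h v)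
    obtain ⟨s, hs, hab⟩ := hR.locally_chain hm a b
    refine ⟨s * q, fun hc => (hm.isPrime.mem_or_mem hc).elim hs hq, ?_⟩
    rcases hab with ⟨c, hc⟩ | ⟨c, hc⟩
    · left
      rw [mul_smul, ← ha, ← mul_smul, hc, mul_smul, hb, ← mul_smul]
      exact Submodule.smul_mem _ _ (Submodule.mem_span_singleton_self _)
    · right
      rw [mul_smul, ← hb, ← mul_smul, hc, mul_smul, ha, ← mul_smul]
      exact Submodule.smul_mem _ _ (Submodule.mem_span_singleton_self _)

theorem IsMultiplicationRing.sup_eq_top_of_minimalPrimes (hR : IsMultiplicationRing R)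
    {P Q : Ideal R} (hP : P ∈ minimalPrimes R) (hQ : Q ∈ minimalPrimes R) (hne : P ≠ Q) :
    P ⊔ Q = ⊤ := by
  by_contra htop
  obtain ⟨m, hm, hle⟩ := Ideal.exists_le_maximal _ htop
  have hPm : P ≤ m := le_sup_left.trans hle
  have hQm : Q ≤ m := le_sup_right.trans hle
  have hPp : P.IsPrime := hP.1.1
  have hQp : Q.IsPrime := hQ.1.1
  have hPQ : ¬ P ≤ Q := fun h => hne (le_antisymm h (hQ.2 hP.1 h))
  have hQP : ¬ Q ≤ P := fun h => hne (le_antisymm (hP.2 hQ.1 h) h)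
  obtain ⟨a, haP, haQ⟩ := SetLike.not_le_iff_exists.1 hPQ
  obtain ⟨b, hbQ, hbP⟩ := SetLike.not_le_iff_exists.1 hQP
  obtain ⟨s, hs, ⟨c, hc⟩ | ⟨c, hc⟩⟩ := hR.locally_chain hm a b
  · exact (hQp.mem_or_mem (hc ▸ Q.mul_mem_left c hbQ : s * a ∈ Q)).elim (fun h => hs (hQm h)) haQ
  · exact (hPp.mem_or_mem (hc ▸ P.mul_mem_left c haP : s * b ∈ P)).elim (fun h => hs (hPm h)) hbP

/-- If a prime `P` of a multiplication ring vanishes when localized at `P`, it vanishes at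
every maximal ideal containing `P`. -/
theorem IsMultiplicationRing.locally_zero_of_le (hR : IsMultiplicationRing R) {P m : Ideal R}
    (hP : P.IsPrime) (hm : m.IsMaximal) (hPm : P ≤ m) (h0 : ∀ x ∈ P, ∃ t ∉ P, t * x = 0)
    {x : R} (hx : x ∈ P) : ∃ s ∉ m, s * x = 0 := by
  rcases (hR.isMultiplicationModule P).dichotomy (Submodule.span_univ) m with
    h1 | ⟨y, -, q, hq, h⟩
  · obtain ⟨p, hp, h⟩ := h1 ⟨x, hx⟩
    exact ⟨1 - p, one_sub_notMem hm.ne_top hp, by simpa using congrArg Subtype.val h⟩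
  · have hgen : ∀ z ∈ P, ∃ d, q * z = d * (y : R) := fun z hz => by
      obtain ⟨d, hd⟩ := Submodule.mem_span_singleton.1 (h ⟨z, hz⟩)
      exact ⟨d, by simpa using (congrArg Subtype.val hd).symm⟩
    -- `y` generates `P` at `m`, and `t ∉ P` kills `y`; being in a chain ring, `t` divides `y`.
    obtain ⟨t, ht, hty⟩ := h0 y y.2
    obtain ⟨s, hs, ⟨c, hc⟩ | ⟨c, hc⟩⟩ := hR.locally_chain hm t y
    · exact ((hP.mem_or_mem (hc ▸ P.mul_mem_left c y.2 : s * t ∈ P)).elim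
        (fun h => hs (hPm h)) ht).elim
    · have hcP : c ∈ P :=
        (hP.mem_or_mem (hc ▸ P.mul_mem_left s y.2 : c * t ∈ P)).resolve_right ht
      obtain ⟨d, hd⟩ := hgen c hcP
      obtain ⟨e, he⟩ := hgen x hx
      refine ⟨q * s * q, fun hcm => (hm.isPrime.mem_or_mem hcm).elim
        (fun h' => (hm.isPrime.mem_or_mem h').elim hq hs) hq, ?_⟩
      linear_combination (q * s) * he + e * q * hc + e * t * hd + e * d * hty

/-- The ideal of all `c` such that `cM` is contained in a finitely generated submodule of `M`. -/
def fgConductor (R M : Type*) [CommRing R] [AddCommGroup M] [Module R M] : Ideal R where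
  carrier := {c | ∃ N : Submodule R M, N.FG ∧ ∀ y : M, c • y ∈ N}
  zero_mem' := ⟨⊥, Submodule.fg_bot, fun y => by simp⟩
  add_mem' := by
    rintro a b ⟨N, hN, ha⟩ ⟨L, hL, hb⟩
    exact ⟨N ⊔ L, hN.sup hL, fun y => add_smul a b y ▸ Submodule.add_mem_sup (ha y) (hb y)⟩
  smul_mem' := by
    rintro r a ⟨N, hN, ha⟩
    exact ⟨N, hN, fun y => by rw [smul_assoc]; exact N.smul_mem r (ha y)⟩

theorem mem_fgConductor_of_span_singleton {c : R} {x : M}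
    (h : ∀ y : M, c • y ∈ Submodule.span R {x}) : c ∈ fgConductor R M :=
  ⟨Submodule.span R {x}, Submodule.fg_span_singleton x, h⟩

theorem finite_of_fgConductor_eq_top (h : fgConductor R M = ⊤) : Module.Finite R M := by
  obtain ⟨N, hN, h1⟩ := (h ▸ Submodule.mem_top : (1 : R) ∈ fgConductor R M)
  have : N = ⊤ := top_le_iff.1 fun y _ => by simpa using h1 y
  exact ⟨this ▸ hN⟩

/-- A multiplication module over a Noetherian ring is finitely generated: `M = FM` for its
`fgConductor` `F`, which is a finitely generated ideal. -/
theorem IsMultiplicationModule.finite [IsNoetherianRing R] (h : IsMultiplicationModule R M) :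
    Module.Finite R M := by
  classical
  have key : ∀ S : Finset R, (S : Set R) ⊆ fgConductor R M →
      ∃ N : Submodule R M, N.FG ∧ Ideal.span (S : Set R) • (⊤ : Submodule R M) ≤ N := by
    intro S
    induction S using Finset.induction_on with
    | empty => exact fun _ => ⟨⊥, Submodule.fg_bot, by simp⟩
    | insert a S _ ih =>
      intro hS
      rw [Finset.coe_insert, Set.insert_subset_iff] at hS
      obtain ⟨N, hN, hle⟩ := ih hS.2
      obtain ⟨L, hL, ha⟩ := hS.1
      refine ⟨L ⊔ N, hL.sup hN, ?_⟩
      rw [Finset.coe_insert, Ideal.span_insert, Submodule.sup_smul]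
      refine sup_le_sup (Submodule.smul_le.2 fun r hr y _ => ?_) hle
      obtain ⟨d, rfl⟩ := Ideal.mem_span_singleton'.1 hr
      rw [mul_smul]
      exact L.smul_mem d (ha y)
  obtain ⟨S, hS⟩ := IsNoetherian.noetherian (fgConductor R M)
  obtain ⟨N, hN, hle⟩ := key S (hS ▸ Submodule.subset_span)
  have hle' : fgConductor R M • (⊤ : Submodule R M) ≤ N := by
    rw [← hS]
    exact hle
  have : N = ⊤ := top_le_iff.1 fun x _ => by
    obtain ⟨I, hI⟩ := h (Submodule.span R {x})
    have hIF : I ≤ fgConductor R M := fun c hc => mem_fgConductor_of_span_singleton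
      fun y => hI ▸ Submodule.smul_mem_smul hc Submodule.mem_top
    exact hle' (Submodule.smul_mono_left hIF (hI ▸ Submodule.mem_span_singleton_self x))
  exact ⟨this ▸ hN⟩

theorem IsMultiplicationRing.isNoetherianRing (hR : IsMultiplicationRing R)
    (hfin : (minimalPrimes R).Finite) : IsNoetherianRing R := by
  refine IsNoetherianRing.of_prime fun P hP => ?_
  by_contra hfg
  have hF : fgConductor R P ≠ ⊤ := fun htop =>
    hfg (Module.Finite.iff_fg.1 (finite_of_fgConductor_eq_top htop))
  obtain ⟨m, hm, hFm⟩ := Ideal.exists_le_maximal _ hF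
  have hPm : P ≤ m := fun x hx => hFm <| mem_fgConductor_of_span_singleton (x := ⟨x, hx⟩) fun z =>
    Submodule.mem_span_singleton.2 ⟨z, Subtype.ext (mul_comm _ _)⟩
  have hz : ∀ x ∈ P, ∃ s ∉ m, s * x = 0 := by
    intro x hx
    rcases (hR.isMultiplicationModule P).dichotomy (Submodule.span_univ) m with
      h1 | ⟨y, -, q, hq, h⟩
    · obtain ⟨p, hp, h⟩ := h1 ⟨x, hx⟩
      exact ⟨1 - p, one_sub_notMem hm.ne_top hp, by simpa using congrArg Subtype.val h⟩
    · exact (hq (hFm (mem_fgConductor_of_span_singleton h))).elim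
  have hPmin : P ∈ minimalPrimes R := by
    refine ⟨⟨hP, bot_le⟩, fun Q hQ hQP x hx => ?_⟩
    obtain ⟨s, hs, hsx⟩ := hz x hx
    exact (hQ.1.mem_or_mem (hsx ▸ Q.zero_mem : s * x ∈ Q)).resolve_left
      fun h => hs (hPm (hQP h))
  have hco : P ⊔ ⨅ Q ∈ hfin.toFinset.erase P, Q = ⊤ := by
    refine Ideal.sup_iInf_eq_top fun Q hQ => ?_
    rw [Finset.mem_erase, Set.Finite.mem_toFinset] at hQ
    exact hR.sup_eq_top_of_minimalPrimes hPmin hQ.2 hQ.1.symm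
  obtain ⟨e, he, f, hf, hef⟩ := Submodule.mem_sup.1
    (hco ▸ Submodule.mem_top : (1 : R) ∈ P ⊔ ⨅ Q ∈ hfin.toFinset.erase P, Q)
  have hPe : P = Ideal.span {e} := by
    refine le_antisymm (fun x hx => mem_of_locally fun m' hm' => ?_)
      ((Ideal.span_singleton_le_iff_mem _).2 he)
    by_cases hPm' : P ≤ m'
    · obtain ⟨s, hs, hsx⟩ := hR.locally_zero_of_le hP hm' hPm'
        (fun y hy => (hz y hy).imp fun s hs => ⟨fun h => hs.1 (hPm h), hs.2⟩) hx
      exact ⟨s, hs, by rw [smul_eq_mul, hsx]; exact Ideal.zero_mem _⟩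
    · -- `m'` contains a minimal prime other than `P`, hence `f`, hence not `e`.
      refine ⟨e, fun hem => ?_, ?_⟩
      · obtain ⟨Q, hQ, hQm⟩ := Ideal.exists_minimalPrimes_le (bot_le : (⊥ : Ideal R) ≤ m')
        have hfQ : f ∈ Q := by
          simp only [Submodule.mem_iInf] at hf
          refine hf Q ?_
          rw [Finset.mem_erase, Set.Finite.mem_toFinset]
          exact ⟨fun h => hPm' (h ▸ hQm), hQ⟩
        exact (Ideal.ne_top_iff_one m').1 hm'.ne_top (hef ▸ m'.add_mem hem (hQm hfQ))
      · exact Ideal.mul_mem_right x _ (Ideal.mem_span_singleton_self e)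
  exact hfg (hPe ▸ ⟨{e}, by simp⟩)

end Aux

/-- Let `R` be a multiplication ring with only finitely many minimal prime ideals. Then an
`R`-module `M` is a faithful, Noetherian, distributive `R`-module if and only if `M` is a
faithful multiplication `R`-module. -/
theorem faithful_noetherian_distributive_iff_faithful_multiplication
    {R : Type u} [CommRing R] (hR : IsMultiplicationRing R)
    (hfin : (minimalPrimes R).Finite)
    (M : Type v) [AddCommGroup M] [Module R M] :
    (Module.annihilator R M = ⊥ ∧ IsNoetherian R M ∧ IsDistributiveModule R M) ↔
      (Module.annihilator R M = ⊥ ∧ IsMultiplicationModule R M) := by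
  refine and_congr_right fun _ => ⟨fun ⟨_, hd⟩ => hd.isMultiplicationModule, fun hM => ?_⟩
  have := hR.isNoetherianRing hfin
  have := hM.finite
  exact ⟨inferInstance, hM.isDistributiveModule hR⟩
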